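/- Let D ⊂ ℝ^d be a bounded measurable set such that the one-sided derivative γ̄_D′⁺(0) exists and is finite, and such that ρ^{d+1} γ̄̂_D(ρ) is bounded and measurable on (0,∞). Then lim_{R→∞} (1/R) ∫₀^R 2π² κ_{d−1} ρ^{d+1} γ̄̂_D(ρ) dρ = −γ̄_D′⁺(0). -/

import Mathlib

open MeasureTheory Metric Set Real Complex Filter
open scoped FourierTransform RealInnerProductSpace Pointwise ENNReal Topology

noncomputable section

/-- The Euclidean space `ℝ^d`. -/
abbrev E (d : ℕ) := EuclideanSpace ℝ (Fin d)

/-- View a plain vector `Fin d → ℝ` as a point of Euclidean space. -/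
def toE {d : ℕ} (v : Fin d → ℝ) : E d := (EuclideanSpace.equiv (Fin d) ℝ).symm v

/-- The point lattice `T = A ℤ^d`. -/
def latticeSet (d : ℕ) (A : Matrix (Fin d) (Fin d) ℝ) : Set (E d) :=
  {p | ∃ n : Fin d → ℤ, p = toE (A.mulVec fun i => (n i : ℝ))}

/-- The fundamental region `F_T = A [0,1)^d`. -/
def fundRegion (d : ℕ) (A : Matrix (Fin d) (Fin d) ℝ) : Set (E d) :=
  (fun y => toE (A.mulVec y)) '' (Set.pi Set.univ fun _ : Fin d => Set.Ico (0 : ℝ) 1)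

/-- Number of lattice points in the translate `D + x`. -/
def latticeCount (d : ℕ) (A : Matrix (Fin d) (Fin d) ℝ) (D : Set (E d)) (x : E d) : ℕ :=
  (((fun y => y + x) '' D) ∩ latticeSet d A).ncard

/-- The dual lattice `T* = {ξ | ξ·p ∈ ℤ for all p ∈ T}`. -/
def dualLattice (d : ℕ) (A : Matrix (Fin d) (Fin d) ℝ) : Set (E d) :=
  {ξ | ∀ p ∈ latticeSet d A, ∃ k : ℤ, ⟪ξ, p⟫ = (k : ℝ)}

/-- The (complex-valued) indicator function of a set. -/
def indC {d : ℕ} (D : Set (E d)) : E d → ℂ := D.indicator 1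

/-- The covariogram `γ_D(x) = ∫ I_D(y) I_D(y - x) dy`. -/
def covariogram {d : ℕ} (D : Set (E d)) (x : E d) : ℝ :=
  ∫ y, (D.indicator (1 : E d → ℝ) y) * (D.indicator (1 : E d → ℝ) (y - x))

/-- The normalized (probability) surface measure on the unit sphere `S^{d-1}`. -/
def sphereProb (d : ℕ) : Measure (sphere (0 : E d) 1) :=
  ((volume : Measure (E d)).toSphere Set.univ)⁻¹ • (volume : Measure (E d)).toSphere

/-- Rotational quadratic average of the modulus of the Fourier transform of `I_D`:
`γ̄̂_D(ρ) = ∫_{S^{d-1}} |Î_D(ρ ξ)|² dσ(ξ)`. -/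
def avgFT {d : ℕ} (D : Set (E d)) (ρ : ℝ) : ℝ :=
  ∫ ξ : sphere (0 : E d) 1, ‖𝓕 (indC D) (ρ • (ξ : E d))‖ ^ 2 ∂(sphereProb d)

/-- The isotropic covariogram, via its (equivalent) definition as the spherical average
`γ̄_D(u) = ∫_{S^{d-1}} γ_D(u ξ) dσ(ξ)`. -/
def isoCov {d : ℕ} (D : Set (E d)) (u : ℝ) : ℝ :=
  ∫ ξ : sphere (0 : E d) 1, covariogram D (u • (ξ : E d)) ∂(sphereProb d)

/-- Bessel function of the first kind (power series definition, real order). -/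
def besselJ (ν : ℝ) (z : ℝ) : ℝ :=
  ∑' k : ℕ, (-1 : ℝ) ^ k * (z / 2) ^ (ν + 2 * k) / (Nat.factorial k * Real.Gamma (ν + k + 1))

/-- `κ_d`, the volume of the unit ball in `ℝ^d`. -/
def unitBallVol (d : ℕ) : ℝ := Real.pi ^ ((d : ℝ) / 2) / Real.Gamma ((d : ℝ) / 2 + 1)

/-- The image of a set `D` under the rotation given by a matrix `M`. -/
def rotSet {d : ℕ} (M : Matrix (Fin d) (Fin d) ℝ) (D : Set (E d)) : Set (E d) :=
  (fun y => toE (M.mulVec (EuclideanSpace.equiv (Fin d) ℝ y))) '' D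

/-- The special orthogonal group `SO(d)`, as a set of matrices. -/
def SOSet (d : ℕ) : Set (Matrix (Fin d) (Fin d) ℝ) :=
  {M | M ∈ Matrix.specialOrthogonalGroup (Fin d) ℝ}

/-- Borel measurable structure on the space of `d × d` real matrices. -/
instance matrixMeasurableSpace {d : ℕ} : MeasurableSpace (Matrix (Fin d) (Fin d) ℝ) :=
  borel _

instance matrixBorelSpace {d : ℕ} : BorelSpace (Matrix (Fin d) (Fin d) ℝ) := ⟨rfl⟩

/-!
The function `|Î_D|²` is the Fourier transform of the covariogram. Pairing both with Gaussians and
passing to polar coordinates turns the first-order expansion of `γ̄_D` at `0` into the asymptotics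
of `∫ ρ^(d-1) γ̄̂_D(ρ) exp (-b ρ²) dρ` to order `√b` as `b → 0+`. Differences of such Gaussian
integrals cancel the leading constant and involve the nonnegative function
`F(ρ) = ρ^(d+1) γ̄̂_D(ρ)` itself, tested against `(exp (-a ρ²) - exp (-b ρ²)) / ρ²`. Karamata's
argument then recovers the averages of `F`: in the variable `x = exp (-t²)` the Gaussian data are
moments of measures on `[0, 1]`, so the measures converge weakly by Weierstrass approximation, and
the limit does not charge the endpoint of the interval that computes the average.
-/

/-! ### Weak convergence from moments, and integrals over continuity sets -/

theorem integral_polynomial_eval (ν : Measure ℝ) (hν : ∀ n : ℕ, Integrable (fun x => x ^ n) ν)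
    (p : Polynomial ℝ) :
    ∫ x, p.eval x ∂ν = p.sum fun n c => c * ∫ x, x ^ n ∂ν := by
  simp only [Polynomial.eval_eq_sum, Polynomial.sum]
  rw [integral_finsetSum _ fun n _ => (hν n).const_mul _]
  simp only [integral_const_mul]

theorem integrable_of_continuous_of_ae_mem_Icc {ν : Measure ℝ} [IsFiniteMeasure ν] {a b : ℝ}
    (hν : ∀ᵐ x ∂ν, x ∈ Icc a b) {f : ℝ → ℝ} (hf : Continuous f) : Integrable f ν := by
  obtain ⟨C, hC⟩ := isCompact_Icc.exists_bound_of_continuousOn hf.continuousOn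
  exact .of_bound hf.aestronglyMeasurable C (hν.mono hC)

theorem dist_integral_le_mul_real_univ {ν : Measure ℝ} [IsFiniteMeasure ν] {a b ε : ℝ}
    (hν : ∀ᵐ x ∂ν, x ∈ Icc a b) {f g : ℝ → ℝ} (hf : Continuous f) (hg : Continuous g)
    (hfg : ∀ x ∈ Icc a b, |f x - g x| ≤ ε) :
    dist (∫ x, f x ∂ν) (∫ x, g x ∂ν) ≤ ε * ν.real univ := by
  rw [dist_eq_norm, ← integral_sub (integrable_of_continuous_of_ae_mem_Icc hν hf)
    (integrable_of_continuous_of_ae_mem_Icc hν hg)]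
  exact norm_integral_le_of_norm_le_const (hν.mono hfg)

theorem tendsto_integral_polynomial_eval {ι : Type*} {l : Filter ι} {ν : ι → Measure ℝ}
    {ν₀ : Measure ℝ} (hν : ∀ i (n : ℕ), Integrable (fun x => x ^ n) (ν i))
    (hν₀ : ∀ n : ℕ, Integrable (fun x => x ^ n) ν₀)
    (hmom : ∀ n : ℕ, Tendsto (fun i => ∫ x, x ^ n ∂ν i) l (𝓝 (∫ x, x ^ n ∂ν₀)))
    (p : Polynomial ℝ) :
    Tendsto (fun i => ∫ x, p.eval x ∂ν i) l (𝓝 (∫ x, p.eval x ∂ν₀)) := by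
  rw [integral_polynomial_eval _ hν₀]
  simp_rw [fun i => integral_polynomial_eval _ (hν i) p]
  exact tendsto_finsetSum _ fun n _ => (hmom n).const_mul _

theorem tendsto_finiteMeasure_of_tendsto_moments {ι : Type*} {l : Filter ι}
    {ν : ι → FiniteMeasure ℝ} {ν₀ : FiniteMeasure ℝ} {a b : ℝ}
    (hν : ∀ i, ∀ᵐ x ∂(ν i : Measure ℝ), x ∈ Icc a b) (hν₀ : ∀ᵐ x ∂(ν₀ : Measure ℝ), x ∈ Icc a b)
    (hmom : ∀ n : ℕ, Tendsto (fun i => ∫ x, x ^ n ∂(ν i : Measure ℝ)) l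
      (𝓝 (∫ x, x ^ n ∂(ν₀ : Measure ℝ)))) :
    Tendsto ν l (𝓝 ν₀) := by
  have hpoly := tendsto_integral_polynomial_eval
    (fun i n => integrable_of_continuous_of_ae_mem_Icc (hν i) (continuous_pow n))
    (fun n => integrable_of_continuous_of_ae_mem_Icc hν₀ (continuous_pow n)) hmom
  have hmass : Tendsto (fun i => (ν i : Measure ℝ).real univ) l
      (𝓝 ((ν₀ : Measure ℝ).real univ)) := by simpa using hmom 0
  rw [FiniteMeasure.tendsto_iff_forall_integral_tendsto]
  intro f
  rw [Metric.tendsto_nhds]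
  intro ε hε
  set M := (ν₀ : Measure ℝ).real univ + 1
  have hM : 0 < M := by positivity
  obtain ⟨p, hp⟩ := exists_polynomial_near_of_continuousOn a b f f.continuous.continuousOn
    (ε / (3 * M)) (by positivity)
  have happrox (ν' : FiniteMeasure ℝ) (h : ∀ᵐ x ∂(ν' : Measure ℝ), x ∈ Icc a b)
      (hle : (ν' : Measure ℝ).real univ ≤ M) :
      dist (∫ x, p.eval x ∂(ν' : Measure ℝ)) (∫ x, f x ∂(ν' : Measure ℝ)) ≤ ε / 3 := by
    calc _ ≤ ε / (3 * M) * (ν' : Measure ℝ).real univ :=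
          dist_integral_le_mul_real_univ h p.continuous f.continuous fun x hx => (hp x hx).le
      _ ≤ ε / (3 * M) * M := by gcongr
      _ = ε / 3 := by field_simp
  filter_upwards [Metric.tendsto_nhds.1 (hpoly p) (ε / 3) (by positivity),
    hmass.eventually_le_const (lt_add_one _)] with i hi hMi
  have h₁ := happrox (ν i) (hν i) hMi
  have h₂ := happrox ν₀ hν₀ (lt_add_one _).le
  rw [dist_comm] at h₁
  linarith [dist_triangle4 (∫ x, f x ∂(ν i : Measure ℝ)) (∫ x, p.eval x ∂(ν i : Measure ℝ))
    (∫ x, p.eval x ∂(ν₀ : Measure ℝ)) (∫ x, f x ∂(ν₀ : Measure ℝ))]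

section ContinuitySet

open scoped BoundedContinuousFunction

variable {Ω ι : Type*} [PseudoEMetricSpace Ω] [MeasurableSpace Ω] [OpensMeasurableSpace Ω]
  {l : Filter ι} {ν : ι → FiniteMeasure Ω} {ν₀ : FiniteMeasure Ω} {f : Ω →ᵇ ℝ} {s : Set Ω}

theorem tendsto_integral_mul_thickenedIndicator (f : Ω →ᵇ ℝ) (s : Set Ω) (ν : Measure Ω)
    [IsFiniteMeasure ν] {δ : ℕ → ℝ} (hδ : ∀ n, 0 < δ n) (hlim : Tendsto δ atTop (𝓝 0)) :
    Tendsto (fun n => ∫ x, f x * (thickenedIndicator (hδ n) s x : ℝ) ∂ν) atTop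
      (𝓝 (∫ x in closure s, f x ∂ν)) := by
  rw [← integral_indicator isClosed_closure.measurableSet]
  refine tendsto_integral_of_dominated_convergence (fun x => ‖f x‖)
    (fun n => Continuous.aestronglyMeasurable (by fun_prop)) (f.integrable ν).norm
    (fun n => .of_forall fun x => ?_) (.of_forall fun x => ?_)
  · rw [norm_mul]
    refine mul_le_of_le_one_right (norm_nonneg _) ?_
    simpa using thickenedIndicator_le_one (hδ n) s x
  · have h := NNReal.tendsto_coe.2
      (tendsto_pi_nhds.1 (thickenedIndicator_tendsto_indicator_closure hδ hlim s) x)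
    by_cases hx : x ∈ closure s <;> simpa [hx] using h.const_mul (f x)

theorem eventually_setIntegral_lt (hν : Tendsto ν l (𝓝 ν₀)) (hf : 0 ≤ f) (hs : MeasurableSet s)
    (hfr : (ν₀ : Measure Ω) (frontier s) = 0) {c : ℝ} (hc : ∫ x in s, f x ∂(ν₀ : Measure Ω) < c) :
    ∀ᶠ i in l, ∫ x in s, f x ∂(ν i : Measure Ω) < c := by
  have hpos (n : ℕ) : (0 : ℝ) < 1 / (n + 1) := by positivity
  have hlim := tendsto_integral_mul_thickenedIndicator f s ν₀ hpos
    tendsto_one_div_add_atTop_nhds_zero_nat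
  rw [setIntegral_congr_set (closure_ae_eq_of_null_frontier hfr)] at hlim
  obtain ⟨n, hn⟩ := (hlim.eventually_lt_const hc).exists
  let g : Ω →ᵇ ℝ :=
    f * (thickenedIndicator (hpos n) s).comp _ NNReal.isometry_coe.lipschitz
  have hg := (FiniteMeasure.tendsto_iff_forall_integral_tendsto.1 hν g).eventually_lt_const hn
  filter_upwards [hg] with i hi
  refine lt_of_le_of_lt ?_ hi
  rw [← integral_indicator hs]
  refine integral_mono ((f.integrable _).indicator hs) (g.integrable _) fun x => ?_
  have hle : s.indicator (fun _ => (1 : NNReal)) x ≤ thickenedIndicator (hpos n) s x :=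
    indicator_le_thickenedIndicator (hpos n) s x
  by_cases hx : x ∈ s
  · simp only [hx, indicator_of_mem] at hle ⊢
    exact le_mul_of_one_le_right (hf x) hle
  · rw [indicator_of_notMem hx]
    exact mul_nonneg (hf x) (NNReal.coe_nonneg _)

theorem tendsto_setIntegral_of_null_frontier (hν : Tendsto ν l (𝓝 ν₀)) (hf : 0 ≤ f)
    (hs : MeasurableSet s) (hfr : (ν₀ : Measure Ω) (frontier s) = 0) :
    Tendsto (fun i => ∫ x in s, f x ∂(ν i : Measure Ω)) l
      (𝓝 (∫ x in s, f x ∂(ν₀ : Measure Ω))) := by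
  have hsplit (ν' : FiniteMeasure Ω) := integral_add_compl hs (f.integrable (ν' : Measure Ω))
  refine tendsto_order.2 ⟨fun c hc => ?_, fun c hc => eventually_setIntegral_lt hν hf hs hfr hc⟩
  obtain ⟨c', hc', hc''⟩ := exists_between hc
  have htotal := FiniteMeasure.tendsto_iff_forall_integral_tendsto.1 hν f
  have hcompl : ∀ᶠ i in l, ∫ x in sᶜ, f x ∂(ν i : Measure Ω) <
      ∫ x in sᶜ, f x ∂(ν₀ : Measure Ω) + (∫ x in s, f x ∂(ν₀ : Measure Ω) - c') :=
    eventually_setIntegral_lt hν hf hs.compl (by rwa [frontier_compl]) (by linarith)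
  filter_upwards [hcompl, htotal.eventually_const_lt
    (show (∫ x, f x ∂(ν₀ : Measure Ω)) - (c' - c) < _ by linarith)] with i h₁ h₂
  linarith [hsplit (ν i), hsplit ν₀]

end ContinuitySet

/-! ### The Gaussian difference kernel -/

/-- The kernel `(exp (-a t²) - exp (-b t²)) / t²`; at `t = 0` it has the junk value `0`. -/
def gaussianDiff (a b t : ℝ) : ℝ := (rexp (-a * t ^ 2) - rexp (-b * t ^ 2)) / t ^ 2

theorem measurable_gaussianDiff (a b : ℝ) : Measurable (gaussianDiff a b) := by
  unfold gaussianDiff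
  fun_prop

theorem gaussianDiff_nonneg {a b : ℝ} (hab : a ≤ b) (t : ℝ) : 0 ≤ gaussianDiff a b t := by
  refine div_nonneg (sub_nonneg.2 (Real.exp_le_exp.2 ?_)) (sq_nonneg t)
  nlinarith [sq_nonneg t]

theorem gaussianDiff_le {a b : ℝ} (hab : a ≤ b) (t : ℝ) :
    gaussianDiff a b t ≤ (b - a) * rexp (-a * t ^ 2) := by
  refine div_le_of_le_mul₀ (sq_nonneg t)
    (mul_nonneg (sub_nonneg.2 hab) (Real.exp_pos _).le) ?_
  have hexp : rexp (-b * t ^ 2) = rexp (-a * t ^ 2) * rexp (-((b - a) * t ^ 2)) := by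
    rw [← Real.exp_add]; ring_nf
  rw [hexp]
  nlinarith [Real.exp_pos (-a * t ^ 2), Real.add_one_le_exp (-((b - a) * t ^ 2))]

theorem integrable_gaussianDiff {a b : ℝ} (ha : 0 < a) (hab : a ≤ b) :
    Integrable (gaussianDiff a b) := by
  refine ((integrable_exp_neg_mul_sq ha).const_mul (b - a)).mono'
    (measurable_gaussianDiff a b).aestronglyMeasurable (.of_forall fun t => ?_)
  rw [Real.norm_of_nonneg (gaussianDiff_nonneg hab t)]
  exact gaussianDiff_le hab t

theorem abs_mul_gaussianDiff_le {a b : ℝ} (ha : 0 ≤ a) (hab : a ≤ b) (t : ℝ) :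
    |t * gaussianDiff a b t| ≤ (b - a) * |t| := by
  rw [abs_mul, abs_of_nonneg (gaussianDiff_nonneg hab t), mul_comm]
  gcongr
  refine (gaussianDiff_le hab t).trans (mul_le_of_le_one_right (sub_nonneg.2 hab) ?_)
  exact Real.exp_le_one_iff.2 (by nlinarith [sq_nonneg t])

theorem abs_mul_gaussianDiff_le_inv {a b : ℝ} (ha : 0 ≤ a) (hab : a ≤ b) {t : ℝ} (ht : 0 < t) :
    |t * gaussianDiff a b t| ≤ t⁻¹ := by
  have hle : rexp (-a * t ^ 2) ≤ 1 := Real.exp_le_one_iff.2 (by nlinarith [sq_nonneg t])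
  have heq : t * gaussianDiff a b t = t⁻¹ * (rexp (-a * t ^ 2) - rexp (-b * t ^ 2)) := by
    unfold gaussianDiff
    field_simp
  rw [abs_of_nonneg (mul_nonneg ht.le (gaussianDiff_nonneg hab t)), heq]
  exact mul_le_of_le_one_right (by positivity) (by linarith [Real.exp_pos (-b * t ^ 2)])

theorem hasDerivAt_neg_mul_gaussianDiff (a b : ℝ) {t : ℝ} (ht : t ≠ 0) :
    HasDerivAt (fun s => -(s * gaussianDiff a b s))
      (gaussianDiff a b t + (2 * a * rexp (-a * t ^ 2) - 2 * b * rexp (-b * t ^ 2))) t := by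
  have hexp (c : ℝ) :
      HasDerivAt (fun s => rexp (-c * s ^ 2)) (rexp (-c * t ^ 2) * (-c * (2 * t))) t := by
    simpa using (((hasDerivAt_id t).pow 2).const_mul (-c)).exp
  have hquot := (((hexp a).sub (hexp b)).div (hasDerivAt_id t) ht).neg
  refine (hquot.congr_of_eventuallyEq ?_).congr_deriv ?_
  · filter_upwards [isOpen_ne.mem_nhds ht] with s hs
    have hs : s ≠ 0 := hs
    simp only [gaussianDiff, id, Pi.sub_apply, Pi.div_apply, Pi.neg_apply]
    field_simp
  · simp only [gaussianDiff, id, Pi.sub_apply]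
    field_simp
    ring

theorem integral_gaussianDiff {a b : ℝ} (ha : 0 < a) (hab : a ≤ b) :
    ∫ t in Ioi 0, gaussianDiff a b t = √π * (√b - √a) := by
  have hb : 0 < b := ha.trans_le hab
  have hgauss {c : ℝ} (hc : 0 < c) : IntegrableOn (fun t => 2 * c * rexp (-c * t ^ 2)) (Ioi 0) :=
    ((integrable_exp_neg_mul_sq hc).const_mul _).integrableOn
  have hval {c : ℝ} (hc : 0 < c) : ∫ t in Ioi 0, 2 * c * rexp (-c * t ^ 2) = √π * √c := by
    rw [integral_const_mul, integral_gaussian_Ioi, Real.sqrt_div Real.pi_pos.le]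
    have := (Real.sqrt_pos.2 hc).ne'
    field_simp
    rw [Real.sq_sqrt hc.le]
  have hker := (integrable_gaussianDiff ha hab).integrableOn (s := Ioi 0)
  have hzero : ContinuousWithinAt (fun s => -(s * gaussianDiff a b s)) (Ici 0) 0 := by
    refine ContinuousAt.continuousWithinAt ?_
    rw [ContinuousAt, zero_mul, neg_zero]
    refine squeeze_zero_norm (a := fun t => (b - a) * |t|) (fun t => ?_) ?_
    · rw [norm_neg]; exact abs_mul_gaussianDiff_le ha.le hab t
    · exact Continuous.tendsto' (by fun_prop) _ _ (by simp)
  have hinfty : Tendsto (fun s => -(s * gaussianDiff a b s)) atTop (𝓝 0) := by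
    refine squeeze_zero_norm' ?_ tendsto_inv_atTop_zero
    filter_upwards [eventually_gt_atTop 0] with t ht
    rw [norm_neg]
    exact abs_mul_gaussianDiff_le_inv ha.le hab ht
  have hftc := integral_Ioi_of_hasDerivAt_of_tendsto hzero
    (fun t ht => hasDerivAt_neg_mul_gaussianDiff a b (ne_of_gt ht))
    (hker.add ((hgauss ha).sub (hgauss hb))) hinfty
  have hsplit := integral_add hker ((hgauss ha).sub (hgauss hb))
  simp only [Pi.sub_apply] at hsplit
  rw [hsplit, integral_sub (hgauss ha) (hgauss hb), hval ha, hval hb] at hftc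
  linarith

/-! ### Karamata's theorem for Gaussian means -/

/-- The image under `t ↦ exp (-t²)` of the measure on `(0, ∞)` with density
`F(t) (exp (-t²) - exp (-2t²)) / t²`. It turns Gaussian means of `F` into the moments of a measure
on `[0, 1]`; a negative density is cut off at `0`. -/
def gaussianImage (F : ℝ → ℝ) : Measure ℝ :=
  ((volume.restrict (Ioi 0)).withDensity fun t => ENNReal.ofReal (F t * gaussianDiff 1 2 t)).map
    fun t => rexp (-t ^ 2)

theorem ae_gaussianImage_mem_Icc (F : ℝ → ℝ) : ∀ᵐ x ∂gaussianImage F, x ∈ Icc (0 : ℝ) 1 := by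
  refine (ae_map_iff (by fun_prop) measurableSet_Icc).2 (.of_forall fun t => ?_)
  exact ⟨(Real.exp_pos _).le, Real.exp_le_one_iff.2 (by nlinarith [sq_nonneg t])⟩

theorem isFiniteMeasure_gaussianImage {F : ℝ → ℝ}
    (hint : IntegrableOn (fun t => F t * gaussianDiff 1 2 t) (Ioi 0)) :
    IsFiniteMeasure (gaussianImage F) :=
  have := isFiniteMeasure_withDensity_ofReal hint.2
  Measure.isFiniteMeasure_map _ _

theorem gaussianImage_singleton (F : ℝ → ℝ) (t : ℝ) : gaussianImage F {rexp (-t ^ 2)} = 0 := by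
  rw [gaussianImage, Measure.map_apply (by fun_prop) (measurableSet_singleton _)]
  refine withDensity_absolutelyContinuous _ _
    (measure_mono_null (fun s (hs : rexp (-s ^ 2) = rexp (-t ^ 2)) => ?_)
      ((Set.toFinite {t, -t}).measure_zero _))
  exact sq_eq_sq_iff_eq_or_eq_neg.1 (neg_injective (Real.exp_injective hs))

theorem integral_gaussianImage {F f : ℝ → ℝ} (hF : Measurable F) (hF₀ : ∀ t ∈ Ioi 0, 0 ≤ F t)
    (hf : Measurable f) :
    ∫ x, f x ∂gaussianImage F =
      ∫ t in Ioi 0, F t * gaussianDiff 1 2 t * f (rexp (-t ^ 2)) := by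
  have hdens : Measurable fun t => ENNReal.ofReal (F t * gaussianDiff 1 2 t) :=
    (hF.mul (measurable_gaussianDiff 1 2)).ennreal_ofReal
  rw [gaussianImage, integral_map (by fun_prop) hf.aestronglyMeasurable,
    integral_withDensity_eq_integral_toReal_smul hdens (by simp)]
  refine setIntegral_congr_fun measurableSet_Ioi fun t ht => ?_
  simp only [smul_eq_mul]
  rw [ENNReal.toReal_ofReal (mul_nonneg (hF₀ t ht) (gaussianDiff_nonneg one_le_two t))]

theorem gaussianDiff_mul_exp_pow (t : ℝ) (n : ℕ) :
    gaussianDiff 1 2 t * rexp (-t ^ 2) ^ n = gaussianDiff (n + 1) (n + 2) t := by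
  rw [gaussianDiff, gaussianDiff, div_mul_eq_mul_div, sub_mul, ← Real.exp_nat_mul, ← Real.exp_add,
    ← Real.exp_add]
  ring_nf

theorem integral_pow_gaussianImage {F : ℝ → ℝ} (hF : Measurable F) (hF₀ : ∀ t ∈ Ioi 0, 0 ≤ F t)
    (n : ℕ) :
    ∫ x, x ^ n ∂gaussianImage F = ∫ t in Ioi 0, F t * gaussianDiff (n + 1) (n + 2) t := by
  rw [integral_gaussianImage hF hF₀ (f := fun x => x ^ n) (by fun_prop)]
  simp only [mul_assoc, gaussianDiff_mul_exp_pow]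

theorem dslope_log_one_nonneg {x : ℝ} (hx : 0 < x) : 0 ≤ dslope Real.log 1 x := by
  rcases eq_or_ne x 1 with rfl | hne
  · simp
  · rw [dslope_of_ne _ hne, slope_def_field, Real.log_one, sub_zero]
    rcases hne.lt_or_gt with h | h
    · exact div_nonneg_of_nonpos (Real.log_nonpos hx.le h.le) (by linarith)
    · exact div_nonneg (Real.log_nonneg h.le) (by linarith)

theorem continuousOn_dslope_log_one : ContinuousOn (dslope Real.log 1) (Ioi 0) :=
  (continuousOn_dslope (Ioi_mem_nhds one_pos)).2
    ⟨Real.continuousOn_log.mono fun _ hx => ne_of_gt hx, Real.differentiableAt_log one_ne_zero⟩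

theorem setIntegral_gaussianImage {F f : ℝ → ℝ} (hF : Measurable F) (hF₀ : ∀ t ∈ Ioi 0, 0 ≤ F t)
    (hf : Measurable f) (hf₁ : ∀ t ∈ Ioc (0 : ℝ) 1, gaussianDiff 1 2 t * f (rexp (-t ^ 2)) = 1) :
    ∫ x in Ici (rexp (-1)), f x ∂gaussianImage F = ∫ t in Ioc 0 1, F t := by
  rw [← integral_indicator measurableSet_Ici,
    integral_gaussianImage hF hF₀ (hf.indicator measurableSet_Ici),
    ← integral_indicator measurableSet_Ioi, ← integral_indicator measurableSet_Ioc]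
  congr 1 with t
  by_cases ht : 0 < t
  · have hiff : rexp (-t ^ 2) ∈ Ici (rexp (-1)) ↔ t ≤ 1 := by
      rw [mem_Ici, Real.exp_le_exp, neg_le_neg_iff, sq_le_one_iff₀ ht.le]
    by_cases ht₁ : t ≤ 1
    · rw [indicator_of_mem (mem_Ioi.2 ht), indicator_of_mem (hiff.2 ht₁),
        indicator_of_mem (mem_Ioc.2 ⟨ht, ht₁⟩), mul_assoc, hf₁ t ⟨ht, ht₁⟩, mul_one]
    · simp [hiff, ht₁]
  · simp [ht]

/- With `x = exp (-t²)` the reciprocal of the kernel is `-log x / (x (1 - x))`, which is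
continuous on `(0, 1]`; to be bounded near `0` it is frozen to the left of `exp (-1)`. -/
open scoped BoundedContinuousFunction in
theorem exists_boundedContinuous_mul_gaussianDiff_eq_one :
    ∃ f : ℝ →ᵇ ℝ, 0 ≤ f ∧ ∀ t ∈ Ioc (0 : ℝ) 1, gaussianDiff 1 2 t * f (rexp (-t ^ 2)) = 1 := by
  have hle : rexp (-1) ≤ 1 := Real.exp_le_one_iff.2 (by norm_num)
  have hpos (x : Icc (rexp (-1)) 1) : 0 < (x : ℝ) := (Real.exp_pos _).trans_le x.2.1
  have hcont : Continuous fun x : Icc (rexp (-1)) 1 => dslope Real.log 1 x / x :=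
    (continuousOn_dslope_log_one.comp_continuous continuous_subtype_val hpos).div
      continuous_subtype_val fun x => (hpos x).ne'
  refine ⟨(BoundedContinuousFunction.mkOfCompact ⟨_, hcont⟩).compContinuous
    ⟨projIcc _ _ hle, continuous_projIcc⟩, fun x => ?_, fun t ht => ?_⟩
  · exact div_nonneg (dslope_log_one_nonneg (hpos _)) (hpos _).le
  · have hlt : rexp (-t ^ 2) < 1 := Real.exp_lt_one_iff.2 (by nlinarith [ht.1])
    have hmem : rexp (-t ^ 2) ∈ Icc (rexp (-1)) 1 :=
      ⟨Real.exp_le_exp.2 (by nlinarith [ht.1, ht.2]), hlt.le⟩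
    have hsq : rexp (-2 * t ^ 2) = rexp (-t ^ 2) ^ 2 := by
      rw [← Real.exp_nat_mul]; push_cast; ring_nf
    simp only [BoundedContinuousFunction.compContinuous_apply, ContinuousMap.coe_mk,
      BoundedContinuousFunction.mkOfCompact_apply, projIcc_of_mem hle hmem]
    rw [dslope_of_ne _ hlt.ne, slope_def_field, Real.log_exp, Real.log_one, gaussianDiff,
      neg_one_mul, hsq]
    have h₁ : rexp (-t ^ 2) - 1 ≠ 0 := by linarith
    have h₂ := (Real.exp_pos (-t ^ 2)).ne'
    have h₃ := ht.1.ne'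
    field_simp
    ring

theorem tendsto_integral_Ioc_of_tendsto_gaussianDiff {ι : Type*} {l : Filter ι} [l.NeBot]
    {F : ι → ℝ → ℝ} {c : ℝ} (hF : ∀ i, Measurable (F i)) (hF₀ : ∀ i, ∀ t ∈ Ioi 0, 0 ≤ F i t)
    (hint : ∀ i, IntegrableOn (fun t => F i t * gaussianDiff 1 2 t) (Ioi 0))
    (hlim : ∀ n : ℕ, Tendsto (fun i => ∫ t in Ioi 0, F i t * gaussianDiff (n + 1) (n + 2) t) l
      (𝓝 (∫ t in Ioi 0, c * gaussianDiff (n + 1) (n + 2) t))) :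
    Tendsto (fun i => ∫ t in Ioc 0 1, F i t) l (𝓝 c) := by
  have hc : 0 ≤ c := by
    have h : 0 ≤ c * ∫ t in Ioi 0, gaussianDiff 1 2 t := by
      have hlim₀ := hlim 0
      simp only [Nat.cast_zero, zero_add, integral_const_mul] at hlim₀
      exact ge_of_tendsto' hlim₀ fun i => setIntegral_nonneg measurableSet_Ioi fun t ht =>
        mul_nonneg (hF₀ i t ht) (gaussianDiff_nonneg one_le_two t)
    have hpos : 0 < √π * (√2 - √1) :=
      mul_pos (Real.sqrt_pos.2 Real.pi_pos) (sub_pos.2 (Real.sqrt_lt_sqrt zero_le_one one_lt_two))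
    rw [integral_gaussianDiff one_pos one_le_two] at h
    exact nonneg_of_mul_nonneg_left h hpos
  have hintc : IntegrableOn (fun t => c * gaussianDiff 1 2 t) (Ioi 0) :=
    ((integrable_gaussianDiff one_pos one_le_two).const_mul c).integrableOn
  let ν (i : ι) : FiniteMeasure ℝ := ⟨gaussianImage (F i), isFiniteMeasure_gaussianImage (hint i)⟩
  let ν₀ : FiniteMeasure ℝ := ⟨gaussianImage fun _ => c, isFiniteMeasure_gaussianImage hintc⟩
  have hweak : Tendsto ν l (𝓝 ν₀) := by
    refine tendsto_finiteMeasure_of_tendsto_moments (fun i => ae_gaussianImage_mem_Icc _)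
      (ae_gaussianImage_mem_Icc _) fun n => ?_
    simpa only [ν, ν₀, FiniteMeasure.toMeasure_mk, integral_pow_gaussianImage (hF _) (hF₀ _),
      integral_pow_gaussianImage measurable_const fun _ _ => hc] using hlim n
  obtain ⟨f, hf₀, hf⟩ := exists_boundedContinuous_mul_gaussianDiff_eq_one
  have hfr : gaussianImage (fun _ => c) (frontier (Ici (rexp (-1)))) = 0 := by
    rw [frontier_Ici]
    simpa using gaussianImage_singleton (fun _ => c) 1
  have h := tendsto_setIntegral_of_null_frontier hweak hf₀ measurableSet_Ici hfr
  have hf_meas := f.continuous.measurable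
  simpa [ν, ν₀, setIntegral_gaussianImage (hF _) (hF₀ _) hf_meas hf,
    setIntegral_gaussianImage measurable_const (fun _ _ => hc) hf_meas hf] using h

theorem mul_sq_mul_gaussianDiff_eq (F : ℝ → ℝ) (a b : ℝ) {R t : ℝ} (hR : R ≠ 0) :
    F (R * t) * gaussianDiff a b t =
      R ^ 2 * (F (R * t) / (R * t) ^ 2 * rexp (-(a / R ^ 2) * (R * t) ^ 2) -
        F (R * t) / (R * t) ^ 2 * rexp (-(b / R ^ 2) * (R * t) ^ 2)) := by
  have hexp (c : ℝ) : -(c / R ^ 2) * (R * t) ^ 2 = -c * t ^ 2 := by field_simp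
  rw [hexp, hexp, gaussianDiff]
  field_simp

theorem integrableOn_comp_mul_mul_gaussianDiff {F : ℝ → ℝ}
    (hint : ∀ b > 0, IntegrableOn (fun t => F t / t ^ 2 * rexp (-b * t ^ 2)) (Ioi 0))
    {a b R : ℝ} (ha : 0 < a) (hb : 0 < b) (hR : 0 < R) :
    IntegrableOn (fun t => F (R * t) * gaussianDiff a b t) (Ioi 0) := by
  have h := (hint (a / R ^ 2) (by positivity)).sub (hint (b / R ^ 2) (by positivity))
  rw [← mul_zero R, ← integrableOn_Ioi_comp_mul_left_iff _ _ hR] at h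
  simp only [mul_sq_mul_gaussianDiff_eq F a b hR.ne']
  exact h.const_mul (R ^ 2)

theorem integral_comp_mul_mul_gaussianDiff {F : ℝ → ℝ}
    (hint : ∀ b > 0, IntegrableOn (fun t => F t / t ^ 2 * rexp (-b * t ^ 2)) (Ioi 0))
    {a b R : ℝ} (ha : 0 < a) (hb : 0 < b) (hR : 0 < R) :
    ∫ t in Ioi 0, F (R * t) * gaussianDiff a b t =
      R * ((∫ t in Ioi 0, F t / t ^ 2 * rexp (-(a / R ^ 2) * t ^ 2)) -
        ∫ t in Ioi 0, F t / t ^ 2 * rexp (-(b / R ^ 2) * t ^ 2)) := by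
  have hsubst := integral_comp_mul_left_Ioi (fun t => F t / t ^ 2 * rexp (-(a / R ^ 2) * t ^ 2) -
    F t / t ^ 2 * rexp (-(b / R ^ 2) * t ^ 2)) 0 hR
  simp only [mul_sq_mul_gaussianDiff_eq F a b hR.ne']
  rw [integral_const_mul, hsubst, mul_zero,
    integral_sub (hint _ (by positivity)) (hint _ (by positivity)), smul_eq_mul, ← mul_assoc,
    show R ^ 2 * R⁻¹ = R by field_simp]

theorem tendsto_mul_sub_of_tendsto_div_sqrt {G : ℝ → ℝ} {G₀ κ : ℝ}
    (hlim : Tendsto (fun b => (G b - G₀) / √b) (𝓝[>] 0) (𝓝 κ)) {a : ℝ} (ha : 0 < a) :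
    Tendsto (fun R : ℝ => R * (G (a / R ^ 2) - G₀)) atTop (𝓝 (κ * √a)) := by
  have hscale : Tendsto (fun R : ℝ => a / R ^ 2) atTop (𝓝[>] 0) :=
    tendsto_nhdsWithin_iff.2 ⟨(tendsto_pow_atTop two_ne_zero).const_div_atTop a,
      (eventually_gt_atTop 0).mono fun R hR => div_pos ha (pow_pos hR 2)⟩
  refine ((hlim.comp hscale).mul_const √a).congr' ?_
  filter_upwards [eventually_gt_atTop 0] with R hR
  have := Real.sqrt_pos.2 ha
  simp only [Function.comp_apply, Real.sqrt_div ha.le, Real.sqrt_sq hR.le]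
  field_simp

theorem tendsto_average_of_tendsto_gaussian {F : ℝ → ℝ} (hF : Measurable F)
    (hF₀ : ∀ t ∈ Ioi 0, 0 ≤ F t)
    (hint : ∀ b > 0, IntegrableOn (fun t => F t / t ^ 2 * rexp (-b * t ^ 2)) (Ioi 0)) {G₀ κ : ℝ}
    (hlim : Tendsto (fun b => ((∫ t in Ioi 0, F t / t ^ 2 * rexp (-b * t ^ 2)) - G₀) / √b)
      (𝓝[>] 0) (𝓝 κ)) :
    Tendsto (fun R => R⁻¹ * ∫ t in Ioc 0 R, F t) atTop (𝓝 (-κ / √π)) := by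
  have hmean {a b : ℝ} (ha : 0 < a) (hab : a ≤ b) :
      Tendsto (fun R => ∫ t in Ioi 0, F (R * t) * gaussianDiff a b t) atTop
        (𝓝 (∫ t in Ioi 0, -κ / √π * gaussianDiff a b t)) := by
    have hb := ha.trans_le hab
    have hval : -κ / √π * (√π * (√b - √a)) = κ * √a - κ * √b := by
      have := Real.sqrt_pos.2 Real.pi_pos
      field_simp
      ring
    rw [integral_const_mul, integral_gaussianDiff ha hab, hval]
    refine ((tendsto_mul_sub_of_tendsto_div_sqrt hlim ha).sub
      (tendsto_mul_sub_of_tendsto_div_sqrt hlim hb)).congr' ?_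
    filter_upwards [eventually_gt_atTop 0] with R hR
    rw [integral_comp_mul_mul_gaussianDiff hint ha hb hR]
    ring
  have hunit : Tendsto (fun R : Ioi (0 : ℝ) => ∫ t in Ioc 0 1, F (R * t)) atTop
      (𝓝 (-κ / √π)) := by
    refine tendsto_integral_Ioc_of_tendsto_gaussianDiff
      (fun R => hF.comp (measurable_const_mul _)) (fun R t ht => hF₀ _ (mem_Ioi.2 (mul_pos R.2 ht)))
      (fun R => integrableOn_comp_mul_mul_gaussianDiff hint one_pos two_pos R.2) fun n => ?_
    exact tendsto_comp_val_Ioi_atTop.2 (hmean (by positivity) (by linarith))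
  refine (tendsto_comp_val_Ioi_atTop (f := fun R => ∫ t in Ioc 0 1, F (R * t)).1 hunit).congr' ?_
  filter_upwards [eventually_gt_atTop 0] with R hR
  rw [← intervalIntegral.integral_of_le zero_le_one, ← intervalIntegral.integral_of_le hR.le,
    intervalIntegral.integral_comp_mul_left _ hR.ne', mul_zero, mul_one, smul_eq_mul]

/-! ### Abelian asymptotics of Gaussian moments -/

theorem integrableOn_rpow_mul_exp_neg_sq {p : ℝ} (hp : -1 < p) :
    IntegrableOn (fun u => u ^ p * rexp (-u ^ 2)) (Ioi 0) := by
  simpa using integrableOn_rpow_mul_exp_neg_mul_sq one_pos hp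

theorem integral_rpow_mul_exp_neg_sq {p : ℝ} (hp : -1 < p) :
    ∫ u in Ioi 0, u ^ p * rexp (-u ^ 2) = Real.Gamma ((p + 1) / 2) / 2 := by
  have h := _root_.integral_rpow_mul_exp_neg_mul_rpow two_pos hp one_pos
  simp only [Real.rpow_two, neg_one_mul, Real.one_rpow] at h
  rw [h]
  ring

theorem rpow_mul_integral_rpow_mul_exp_neg_mul_sq (k : ℝ → ℝ) (p : ℝ) {β : ℝ} (hβ : 0 < β) :
    β ^ ((p + 1) / 2) * ∫ s in Ioi 0, s ^ p * k s * rexp (-β * s ^ 2) =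
      ∫ u in Ioi 0, u ^ p * rexp (-u ^ 2) * k (u / √β) := by
  have hsqrt : 0 < √β := Real.sqrt_pos.2 hβ
  have hsubst := integral_comp_mul_left_Ioi (fun u => u ^ p * rexp (-u ^ 2) * k (u / √β)) 0 hsqrt
  rw [mul_zero, smul_eq_mul, eq_inv_mul_iff_mul_eq₀ hsqrt.ne'] at hsubst
  have hpow : β ^ ((p + 1) / 2) = √β * √β ^ p := by
    rw [mul_comm, ← Real.rpow_add_one hsqrt.ne', Real.sqrt_eq_rpow, ← Real.rpow_mul hβ.le]
    ring_nf
  rw [← hsubst, hpow, mul_assoc, ← integral_const_mul]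
  congr 1
  refine setIntegral_congr_fun measurableSet_Ioi fun s hs => ?_
  rw [Real.mul_rpow hsqrt.le (le_of_lt hs), mul_pow, Real.sq_sqrt hβ.le,
    mul_div_cancel_left₀ s hsqrt.ne', neg_mul]
  ring

theorem tendsto_rpow_mul_integral_rpow_mul_exp_neg_mul_sq {k : ℝ → ℝ} {p L C : ℝ} (hp : -1 < p)
    (hk : Measurable k) (hC : ∀ s > 0, |k s| ≤ C) (hlim : Tendsto k (𝓝[>] 0) (𝓝 L)) :
    Tendsto (fun β => β ^ ((p + 1) / 2) * ∫ s in Ioi 0, s ^ p * k s * rexp (-β * s ^ 2)) atTop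
      (𝓝 (Real.Gamma ((p + 1) / 2) / 2 * L)) := by
  rw [← integral_rpow_mul_exp_neg_sq hp, ← integral_mul_const]
  have hdom : Tendsto (fun β => ∫ u in Ioi 0, u ^ p * rexp (-u ^ 2) * k (u / √β)) atTop
      (𝓝 (∫ u in Ioi 0, u ^ p * rexp (-u ^ 2) * L)) := by
    refine tendsto_integral_filter_of_dominated_convergence
      (fun u => u ^ p * rexp (-u ^ 2) * C) (.of_forall fun β => Measurable.aestronglyMeasurable
        (by fun_prop)) ?_ ((integrableOn_rpow_mul_exp_neg_sq hp).mul_const C) ?_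
    · filter_upwards [eventually_gt_atTop 0] with β hβ
      filter_upwards [ae_restrict_mem measurableSet_Ioi] with u hu
      have hu : 0 < u := hu
      rw [norm_mul, Real.norm_of_nonneg (by positivity)]
      gcongr
      exact hC _ (div_pos hu (Real.sqrt_pos.2 hβ))
    · filter_upwards [ae_restrict_mem measurableSet_Ioi] with u hu
      refine (hlim.comp (tendsto_nhdsWithin_iff.2 ⟨?_, ?_⟩)).const_mul _
      · exact Real.tendsto_sqrt_atTop.const_div_atTop u
      · filter_upwards [eventually_gt_atTop 0] with β hβ
        exact div_pos hu (Real.sqrt_pos.2 hβ)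
  refine hdom.congr' ?_
  filter_upwards [eventually_gt_atTop 0] with β hβ
  exact (rpow_mul_integral_rpow_mul_exp_neg_mul_sq k p hβ).symm

theorem exists_forall_abs_slope_le {g : ℝ → ℝ} {L M : ℝ} (hM : ∀ s, |g s| ≤ M)
    (hlim : Tendsto (fun s => (g s - g 0) / s) (𝓝[>] 0) (𝓝 L)) :
    ∃ C, ∀ s > 0, |(g s - g 0) / s| ≤ C := by
  obtain ⟨δ, hδ, hnear⟩ := mem_nhdsGT_iff_exists_Ioo_subset.1
    (hlim.abs.eventually_le_const (lt_add_one |L|))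
  have hδ : 0 < δ := hδ
  refine ⟨max (|L| + 1) (2 * M / δ), fun s hs => ?_⟩
  rcases lt_or_ge s δ with hsδ | hsδ
  · exact le_max_of_le_left (hnear ⟨hs, hsδ⟩)
  · refine le_max_of_le_right ?_
    rw [abs_div, abs_of_pos hs]
    have hsub : |g s - g 0| ≤ 2 * M := (abs_sub _ _).trans (by linarith [hM s, hM 0])
    exact div_le_div₀ ((abs_nonneg _).trans hsub) hsub hδ hsδ

/-! ### Polar coordinates -/

theorem smul_homeomorphUnitSphereProd {V : Type*} [NormedAddCommGroup V] [NormedSpace ℝ V]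
    (x : ({0}ᶜ : Set V)) :
    ((homeomorphUnitSphereProd V x).2 : ℝ) • ((homeomorphUnitSphereProd V x).1 : V) = x := by
  simp [smul_smul, norm_ne_zero_iff.2 x.2]

section Polar

variable {V F : Type*} [NormedAddCommGroup V] [NormedSpace ℝ V] [FiniteDimensional ℝ V]
  [MeasurableSpace V] [BorelSpace V] [NormedAddCommGroup F]
  (μ : Measure V) [μ.IsAddHaarMeasure] {f : V → F}

theorem integrable_smul_toSphere_prod (hf : Integrable f μ) :
    Integrable (fun p : sphere (0 : V) 1 × Ioi (0 : ℝ) => f ((p.2 : ℝ) • (p.1 : V)))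
      (μ.toSphere.prod (.volumeIoiPow (Module.finrank ℝ V - 1))) := by
  rw [← μ.measurePreserving_homeomorphUnitSphereProd.integrable_comp_emb
    (homeomorphUnitSphereProd V).measurableEmbedding]
  simp only [Function.comp_def, smul_homeomorphUnitSphereProd]
  exact (integrableOn_iff_comap_subtypeVal (measurableSet_singleton 0).compl).1 hf.integrableOn

variable [NormedSpace ℝ F]

theorem integrableOn_pow_smul_integral_toSphere (hf : Integrable f μ) :
    IntegrableOn (fun r : ℝ => r ^ (Module.finrank ℝ V - 1) •
      ∫ ξ : sphere (0 : V) 1, f (r • (ξ : V)) ∂μ.toSphere) (Ioi 0) := by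
  have h := (integrable_smul_toSphere_prod μ hf).integral_prod_right
  rw [Measure.volumeIoiPow,
    integrable_withDensity_iff_integrable_smul' (by fun_prop) (by simp)] at h
  rw [integrableOn_iff_comap_subtypeVal measurableSet_Ioi]
  refine h.congr (.of_forall fun r => ?_)
  simp only [Function.comp, ENNReal.toReal_ofReal (pow_nonneg (le_of_lt r.2) _)]

variable [Nontrivial V]

theorem integral_smul_toSphere_prod :
    ∫ p : sphere (0 : V) 1 × Ioi (0 : ℝ), f ((p.2 : ℝ) • (p.1 : V))
      ∂μ.toSphere.prod (.volumeIoiPow (Module.finrank ℝ V - 1)) = ∫ x, f x ∂μ := by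
  rw [← μ.measurePreserving_homeomorphUnitSphereProd.integral_comp
    (homeomorphUnitSphereProd V).measurableEmbedding]
  simp only [smul_homeomorphUnitSphereProd]
  rw [integral_subtype_comap (measurableSet_singleton 0).compl f, restrict_compl_singleton]

theorem integral_eq_integral_pow_smul_integral_toSphere (hf : Integrable f μ) :
    ∫ x, f x ∂μ = ∫ r in Ioi (0 : ℝ), r ^ (Module.finrank ℝ V - 1) •
      ∫ ξ : sphere (0 : V) 1, f (r • (ξ : V)) ∂μ.toSphere := by
  rw [← integral_smul_toSphere_prod μ, integral_prod_symm _ (integrable_smul_toSphere_prod μ hf),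
    Measure.volumeIoiPow, integral_withDensity_eq_integral_toReal_smul (by fun_prop) (by simp),
    ← integral_subtype_comap measurableSet_Ioi]
  congr 1 with r
  rw [ENNReal.toReal_ofReal (pow_nonneg (le_of_lt r.2) _)]

end Polar

section SphereMean

variable {d : ℕ}

/-- The mean of `f` over the sphere of radius `r` about the origin; `isoCov` and `avgFT` are
both of this form. -/
def sphereMean (f : E d → ℝ) (r : ℝ) : ℝ :=
  ∫ ξ : sphere (0 : E d) 1, f (r • (ξ : E d)) ∂sphereProb d

/-- The total surface area of the unit sphere in `ℝ^d`. -/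
def sphereArea (d : ℕ) : ℝ := (volume : Measure (E d)).toSphere.real univ

theorem sphereMean_mul_radial (f : E d → ℝ) (φ : ℝ → ℝ) {r : ℝ} (hr : 0 ≤ r) :
    sphereMean (fun x => f x * φ ‖x‖) r = sphereMean f r * φ r := by
  have hnorm (ξ : sphere (0 : E d) 1) : ‖r • (ξ : E d)‖ = r := by
    rw [norm_smul, norm_eq_of_mem_sphere, mul_one, Real.norm_of_nonneg hr]
  simp only [sphereMean, hnorm, integral_mul_const]

variable [NeZero d]

theorem sphereArea_pos : 0 < sphereArea d :=
  have : NeZero (volume : Measure (E d)).toSphere := ⟨Measure.toSphere_ne_zero _⟩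
  measureReal_univ_pos

instance isProbabilityMeasure_sphereProb : IsProbabilityMeasure (sphereProb d) :=
  have : NeZero (volume : Measure (E d)).toSphere := ⟨Measure.toSphere_ne_zero _⟩
  isProbabilityMeasureSMul

theorem sphereMean_const (c r : ℝ) : sphereMean (fun _ : E d => c) r = c := by
  simp [sphereMean]

theorem abs_sphereMean_le {f : E d → ℝ} {C : ℝ} (hf : ∀ x, |f x| ≤ C) (r : ℝ) :
    |sphereMean f r| ≤ C := by
  simpa [sphereMean] using norm_integral_le_of_norm_le_const (μ := sphereProb d) (C := C)
    (f := fun ξ : sphere (0 : E d) 1 => f (r • (ξ : E d))) (.of_forall fun ξ => hf _)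

theorem measurable_sphereMean {f : E d → ℝ} (hf : Measurable f) : Measurable (sphereMean f) :=
  (StronglyMeasurable.integral_prod_right
    (f := fun r (ξ : sphere (0 : E d) 1) => f (r • (ξ : E d)))
    (Measurable.stronglyMeasurable (by fun_prop))).measurable

theorem integral_toSphere_eq_sphereArea_mul_sphereMean (f : E d → ℝ) (r : ℝ) :
    ∫ ξ : sphere (0 : E d) 1, f (r • (ξ : E d)) ∂(volume : Measure (E d)).toSphere =
      sphereArea d * sphereMean f r := by
  rw [sphereMean, sphereProb, integral_smul_measure, ENNReal.toReal_inv, smul_eq_mul]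
  exact (mul_inv_cancel_left₀ sphereArea_pos.ne' _).symm

theorem integrableOn_pow_mul_sphereMean_mul {f : E d → ℝ} {φ : ℝ → ℝ}
    (hf : Integrable fun x => f x * φ ‖x‖) :
    IntegrableOn (fun r => r ^ (d - 1) * (sphereMean f r * φ r)) (Ioi 0) := by
  refine IntegrableOn.congr_fun (Integrable.const_mul
    (integrableOn_pow_smul_integral_toSphere volume hf) (sphereArea d)⁻¹)
    (fun r hr => ?_) measurableSet_Ioi
  simp only [integral_toSphere_eq_sphereArea_mul_sphereMean (fun x => f x * φ ‖x‖),
    sphereMean_mul_radial f φ (le_of_lt hr), finrank_euclideanSpace_fin, smul_eq_mul]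
  have := (sphereArea_pos (d := d)).ne'
  field_simp

theorem integral_mul_radial {f : E d → ℝ} {φ : ℝ → ℝ} (hf : Integrable fun x => f x * φ ‖x‖) :
    ∫ x, f x * φ ‖x‖ =
      sphereArea d * ∫ r in Ioi 0, r ^ (d - 1) * (sphereMean f r * φ r) := by
  rw [integral_eq_integral_pow_smul_integral_toSphere volume hf, ← integral_const_mul]
  refine setIntegral_congr_fun measurableSet_Ioi fun r hr => ?_
  simp only [integral_toSphere_eq_sphereArea_mul_sphereMean (fun x => f x * φ ‖x‖),
    sphereMean_mul_radial f φ (le_of_lt hr), finrank_euclideanSpace_fin, smul_eq_mul]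
  ring

end SphereMean

/-! ### The covariogram and its Fourier transform -/

section Fourier

variable {V : Type*} [NormedAddCommGroup V] [InnerProductSpace ℝ V] [FiniteDimensional ℝ V]
  [MeasurableSpace V] [BorelSpace V]

theorem fourier_conj_comp_neg (f : V → ℂ) (ξ : V) :
    𝓕 (fun x => starRingEnd ℂ (f (-x))) ξ = starRingEnd ℂ (𝓕 f ξ) := by
  rw [Real.fourier_eq', Real.fourier_eq', ← integral_conj,
    ← integral_neg_eq_self (μ := (volume : Measure V))]
  congr 1 with v
  simp only [neg_neg, smul_eq_mul, map_mul, ← Complex.exp_conj, inner_neg_left,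
    Complex.conj_ofReal, Complex.conj_I]
  push_cast
  ring_nf

theorem integrable_conj_comp_neg {f : V → ℂ} (hf : Integrable f) :
    Integrable fun x => starRingEnd ℂ (f (-x)) :=
  (LinearIsometryEquiv.integrable_comp_iff Complex.conjLIE).2 hf.comp_neg

theorem fourier_autocorrelation {f : V → ℂ} (hf : Integrable f) (ξ : V) :
    𝓕 (convolution f (fun x => starRingEnd ℂ (f (-x))) (ContinuousLinearMap.mul ℂ ℂ) volume) ξ =
      (‖𝓕 f ξ‖ ^ 2 : ℝ) := by
  rw [Real.fourier_mul_convolution_eq hf (integrable_conj_comp_neg hf), fourier_conj_comp_neg,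
    Complex.mul_conj, Complex.normSq_eq_norm_sq]

theorem integrable_cexp_neg_mul_sq_norm {b : ℝ} (hb : 0 < b) :
    Integrable fun v : V => cexp (-(b : ℂ) * (‖v‖ : ℂ) ^ 2) := by
  simpa using GaussianFourier.integrable_cexp_neg_mul_sq_norm_add (b := b) (by simpa using hb) 0
    (0 : V)

theorem integrable_exp_neg_mul_sq_norm {b : ℝ} (hb : 0 < b) :
    Integrable fun v : V => rexp (-b * ‖v‖ ^ 2) := by
  refine (integrable_cexp_neg_mul_sq_norm hb).norm.congr (.of_forall fun v => ?_)
  simp only [Complex.norm_exp, ← Complex.ofReal_neg, ← Complex.ofReal_pow, ← Complex.ofReal_mul,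
    Complex.ofReal_re]

theorem integral_fourier_mul_gaussian {f : V → ℂ} (hf : Integrable f) {b : ℝ} (hb : 0 < b) :
    ∫ ξ, 𝓕 f ξ * rexp (-b * ‖ξ‖ ^ 2) =
      ∫ x, f x * ((π / b) ^ (Module.finrank ℝ V / 2 : ℝ) * rexp (-(π ^ 2 / b) * ‖x‖ ^ 2) : ℝ) := by
  have hb' : 0 < (b : ℂ).re := by simpa using hb
  have hflip := VectorFourier.integral_fourierIntegral_smul_eq_flip (L := innerₗ V)
    Real.continuous_fourierChar continuous_inner hf
    (integrable_cexp_neg_mul_sq_norm hb)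
  rw [flip_innerₗ] at hflip
  refine Eq.trans ?_ (hflip.trans ?_)
  · congr 1 with ξ
    push_cast
    rfl
  · congr 1 with x
    change f x • 𝓕 (fun v : V => cexp (-(b : ℂ) * (‖v‖ : ℂ) ^ 2)) x = _
    rw [fourier_gaussian_innerProductSpace hb', smul_eq_mul]
    push_cast [Complex.ofReal_cpow (show 0 ≤ π / b by positivity)]
    ring_nf

end Fourier

section Covariogram

variable {d : ℕ} {D : Set (E d)}

theorem integrable_indC (hD : MeasurableSet D) (hfin : volume D ≠ ∞) : Integrable (indC D) :=
  (integrable_indicator_iff hD).2 (integrableOn_const hfin)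

theorem ofReal_covariogram_eq_convolution (D : Set (E d)) :
    (fun x => (covariogram D x : ℂ)) = convolution (indC D)
      (fun x => starRingEnd ℂ (indC D (-x))) (ContinuousLinearMap.mul ℂ ℂ) volume := by
  ext x
  rw [convolution_def, covariogram, ← integral_complex_ofReal]
  congr 1 with y
  by_cases h₁ : y ∈ D <;> by_cases h₂ : y - x ∈ D <;> simp [indC, h₁, h₂]

theorem fourier_covariogram (hD : MeasurableSet D) (hfin : volume D ≠ ∞) (ξ : E d) :
    𝓕 (fun x => (covariogram D x : ℂ)) ξ = (‖𝓕 (indC D) ξ‖ ^ 2 : ℝ) := by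
  rw [ofReal_covariogram_eq_convolution, fourier_autocorrelation (integrable_indC hD hfin)]

theorem measurable_covariogram (hD : MeasurableSet D) : Measurable (covariogram D) := by
  have : Measurable (D.indicator (1 : E d → ℝ)) := measurable_one.indicator hD
  exact (StronglyMeasurable.integral_prod_right
    (f := fun x y => D.indicator (1 : E d → ℝ) y * D.indicator (1 : E d → ℝ) (y - x))
    (Measurable.stronglyMeasurable (by fun_prop))).measurable

theorem integrable_covariogram (hD : MeasurableSet D) (hfin : volume D ≠ ∞) :
    Integrable (covariogram D) := by
  have hind := integrable_indC hD hfin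
  have hconv := hind.integrable_convolution (ContinuousLinearMap.mul ℂ ℂ)
    (integrable_conj_comp_neg hind)
  rw [← ofReal_covariogram_eq_convolution] at hconv
  simpa using hconv.re

theorem abs_covariogram_le (hD : MeasurableSet D) (hfin : volume D ≠ ∞) (x : E d) :
    |covariogram D x| ≤ volume.real D := by
  have hint : Integrable (D.indicator (1 : E d → ℝ)) :=
    (integrable_indicator_iff hD).2 (integrableOn_const hfin)
  rw [← integral_indicator_one hD, covariogram, ← Real.norm_eq_abs]
  refine norm_integral_le_of_norm_le hint (.of_forall fun y => ?_)
  by_cases h₁ : y ∈ D <;> by_cases h₂ : y - x ∈ D <;> simp [h₁, h₂]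

theorem integral_norm_fourier_sq_mul_gaussian (hD : MeasurableSet D) (hfin : volume D ≠ ∞)
    {b : ℝ} (hb : 0 < b) :
    ∫ ξ, ‖𝓕 (indC D) ξ‖ ^ 2 * rexp (-b * ‖ξ‖ ^ 2) =
      ∫ x, covariogram D x * ((π / b) ^ (d / 2 : ℝ) * rexp (-(π ^ 2 / b) * ‖x‖ ^ 2)) := by
  have h := integral_fourier_mul_gaussian ((integrable_covariogram hD hfin).ofReal (𝕜 := ℂ)) hb
  simp only [RCLike.ofReal_eq_complex_ofReal, fourier_covariogram hD hfin,
    ← Complex.ofReal_mul, integral_complex_ofReal, finrank_euclideanSpace_fin] at h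
  exact Complex.ofReal_injective h

theorem continuous_fourier_indC (hD : MeasurableSet D) (hfin : volume D ≠ ∞) :
    Continuous (𝓕 (indC D)) :=
  VectorFourier.fourierIntegral_continuous Real.continuous_fourierChar continuous_inner
    (integrable_indC hD hfin)

theorem integrable_norm_fourier_sq_mul_gaussian (hD : MeasurableSet D) (hfin : volume D ≠ ∞)
    {b : ℝ} (hb : 0 < b) :
    Integrable fun ξ => ‖𝓕 (indC D) ξ‖ ^ 2 * rexp (-b * ‖ξ‖ ^ 2) := by
  have hcont := continuous_fourier_indC hD hfin
  refine Integrable.bdd_mul (c := (∫ x, ‖indC D x‖) ^ 2) (integrable_exp_neg_mul_sq_norm hb)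
    (Continuous.aestronglyMeasurable (by fun_prop)) (.of_forall fun ξ => ?_)
  rw [norm_pow, norm_norm]
  gcongr
  exact VectorFourier.norm_fourierIntegral_le_integral_norm _ _ _ _ _

end Covariogram

/-! ### Gaussian means of the covariogram and of its Fourier transform -/

theorem div_rpow_div_sqrt (p : ℝ) {b : ℝ} (hb : 0 < b) :
    (π / b) ^ (p / 2) / √b = π ^ (-(p / 2 + 1)) * (π ^ 2 / b) ^ ((p + 1) / 2) := by
  have hπ := Real.pi_pos
  rw [Real.div_rpow hπ.le hb.le, Real.div_rpow (by positivity) hb.le, Real.sqrt_eq_rpow,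
    div_div, ← Real.rpow_add hb, ← Real.rpow_natCast, ← Real.rpow_mul hπ.le, mul_div_assoc',
    ← Real.rpow_add hπ]
  congr 2 <;> push_cast <;> ring

theorem two_pi_sq_mul_unitBallVol_mul (d : ℕ) [NeZero d] :
    2 * π ^ 2 * unitBallVol (d - 1) *
      (π ^ (-(d / 2 + 1) : ℝ) * (Real.Gamma ((d + 1) / 2) / 2) / √π) = 1 := by
  obtain ⟨k, rfl⟩ := Nat.exists_eq_add_one_of_ne_zero (NeZero.ne d)
  have hπ := Real.pi_pos
  have := Real.Gamma_pos_of_pos (show 0 < (k : ℝ) / 2 + 1 by positivity)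
  have hpow : π ^ 2 * π ^ (k / 2 : ℝ) * π ^ (-((k + 1 + 2) / 2) : ℝ) = √π := by
    rw [Real.sqrt_eq_rpow, ← Real.rpow_natCast, ← Real.rpow_add hπ, ← Real.rpow_add hπ]
    congr 1
    push_cast
    ring
  rw [unitBallVol, Nat.add_sub_cancel, Nat.cast_add_one,
    show ((k : ℝ) + 1 + 1) / 2 = k / 2 + 1 by ring]
  have hs : √π ≠ 0 := (Real.sqrt_pos.2 hπ).ne'
  field_simp
  exact hpow

theorem pow_succ_mul_div_sq_mul {d : ℕ} [NeZero d] {t : ℝ} (ht : t ≠ 0) (u v : ℝ) :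
    t ^ (d + 1) * u / t ^ 2 * v = t ^ (d - 1) * (u * v) := by
  obtain ⟨k, rfl⟩ := Nat.exists_eq_add_one_of_ne_zero (NeZero.ne d)
  rw [Nat.add_sub_cancel]
  field_simp
  ring

section GaussianMean

variable {d : ℕ} {D : Set (E d)}

theorem avgFT_eq_sphereMean (D : Set (E d)) :
    avgFT D = sphereMean fun ξ => ‖𝓕 (indC D) ξ‖ ^ 2 := rfl

theorem isoCov_eq_sphereMean (D : Set (E d)) : isoCov D = sphereMean (covariogram D) := rfl

theorem avgFT_nonneg (D : Set (E d)) (t : ℝ) : 0 ≤ avgFT D t :=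
  integral_nonneg fun _ => sq_nonneg _

theorem integral_gaussian_kernel {b : ℝ} (hb : 0 < b) :
    ∫ x : E d, (π / b) ^ (d / 2 : ℝ) * rexp (-(π ^ 2 / b) * ‖x‖ ^ 2) = 1 := by
  rw [integral_const_mul, GaussianFourier.integral_rexp_neg_mul_sq_norm (by positivity),
    finrank_euclideanSpace_fin, ← Real.mul_rpow (by positivity) (by positivity),
    show π / b * (π / (π ^ 2 / b)) = 1 by field_simp, Real.one_rpow]

theorem integrable_mul_gaussian_kernel {f : E d → ℝ} (hf : Integrable f) {b : ℝ} (hb : 0 < b) :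
    Integrable fun x => f x * ((π / b) ^ (d / 2 : ℝ) * rexp (-(π ^ 2 / b) * ‖x‖ ^ 2)) := by
  refine hf.mul_bdd (c := (π / b) ^ (d / 2 : ℝ)) (Continuous.aestronglyMeasurable (by fun_prop))
    (.of_forall fun x => ?_)
  rw [Real.norm_of_nonneg (by positivity)]
  refine mul_le_of_le_one_right (by positivity) (Real.exp_le_one_iff.2 ?_)
  rw [neg_mul, neg_nonpos]
  positivity

variable [NeZero d]

theorem measurable_avgFT (hD : MeasurableSet D) (hfin : volume D ≠ ∞) : Measurable (avgFT D) :=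
  measurable_sphereMean ((continuous_fourier_indC hD hfin).norm.pow 2).measurable

theorem abs_isoCov_le (hD : MeasurableSet D) (hfin : volume D ≠ ∞) (r : ℝ) :
    |isoCov D r| ≤ volume.real D :=
  abs_sphereMean_le (abs_covariogram_le hD hfin) r

theorem measurable_isoCov (hD : MeasurableSet D) : Measurable (isoCov D) :=
  measurable_sphereMean (measurable_covariogram hD)

theorem integrableOn_pow_mul_avgFT_div_sq_mul_exp (hD : MeasurableSet D) (hfin : volume D ≠ ∞)
    {b : ℝ} (hb : 0 < b) :
    IntegrableOn (fun t => t ^ (d + 1) * avgFT D t / t ^ 2 * rexp (-b * t ^ 2)) (Ioi 0) :=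
  (integrableOn_pow_mul_sphereMean_mul (φ := fun t => rexp (-b * t ^ 2))
    (integrable_norm_fourier_sq_mul_gaussian hD hfin hb)).congr_fun
    (fun _ ht => (pow_succ_mul_div_sq_mul (ne_of_gt ht) _ _).symm) measurableSet_Ioi

theorem sphereArea_mul_integral_avgFT (hD : MeasurableSet D) (hfin : volume D ≠ ∞)
    {b : ℝ} (hb : 0 < b) :
    sphereArea d * ∫ t in Ioi 0, t ^ (d + 1) * avgFT D t / t ^ 2 * rexp (-b * t ^ 2) =
      ∫ x, covariogram D x * ((π / b) ^ (d / 2 : ℝ) * rexp (-(π ^ 2 / b) * ‖x‖ ^ 2)) := by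
  rw [← integral_norm_fourier_sq_mul_gaussian hD hfin hb,
    integral_mul_radial (φ := fun t => rexp (-b * t ^ 2))
      (integrable_norm_fourier_sq_mul_gaussian hD hfin hb), avgFT_eq_sphereMean]
  congr 1
  exact setIntegral_congr_fun measurableSet_Ioi fun t ht =>
    pow_succ_mul_div_sq_mul (ne_of_gt ht) _ _

theorem integral_covariogram_mul_gaussian_sub (hD : MeasurableSet D) (hfin : volume D ≠ ∞)
    {b : ℝ} (hb : 0 < b) :
    (∫ x, covariogram D x * ((π / b) ^ (d / 2 : ℝ) * rexp (-(π ^ 2 / b) * ‖x‖ ^ 2))) -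
      isoCov D 0 = sphereArea d * ((π / b) ^ (d / 2 : ℝ) *
        ∫ s in Ioi 0, s ^ (d : ℝ) * ((isoCov D s - isoCov D 0) / s) *
          rexp (-(π ^ 2 / b) * s ^ 2)) := by
  set g : ℝ → ℝ := fun r => (π / b) ^ (d / 2 : ℝ) * rexp (-(π ^ 2 / b) * r ^ 2)
  have hcov : Integrable fun x => covariogram D x * g ‖x‖ :=
    integrable_mul_gaussian_kernel (integrable_covariogram hD hfin) hb
  have hg : ∫ x : E d, g ‖x‖ = 1 := integral_gaussian_kernel hb
  have hconst : Integrable fun x : E d => isoCov D 0 * g ‖x‖ :=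
    (Integrable.of_integral_ne_zero (by rw [hg]; exact one_ne_zero)).const_mul _
  have hconst_int := integrableOn_pow_mul_sphereMean_mul hconst
  have hconst_eq := integral_mul_radial hconst
  rw [integral_const_mul, hg, mul_one] at hconst_eq
  simp only [sphereMean_const] at hconst_int hconst_eq
  calc (∫ x, covariogram D x * g ‖x‖) - isoCov D 0
      = sphereArea d * ∫ r in Ioi 0, r ^ (d - 1) * (isoCov D r * g r) -
          r ^ (d - 1) * (isoCov D 0 * g r) := by
        rw [isoCov_eq_sphereMean] at hconst_int hconst_eq ⊢
        rw [integral_sub (integrableOn_pow_mul_sphereMean_mul hcov) hconst_int, mul_sub,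
          ← integral_mul_radial hcov, ← hconst_eq]
    _ = _ := by
        congr 1
        rw [← integral_const_mul]
        refine setIntegral_congr_fun measurableSet_Ioi fun r hr => ?_
        have hr₀ : r ≠ 0 := ne_of_gt hr
        simp only [g, Real.rpow_natCast, ← mul_pow_sub_one (NeZero.ne d) r]
        field_simp

theorem integral_avgFT_gaussian_sub (hD : MeasurableSet D) (hfin : volume D ≠ ∞)
    {b : ℝ} (hb : 0 < b) :
    (∫ t in Ioi 0, t ^ (d + 1) * avgFT D t / t ^ 2 * rexp (-b * t ^ 2)) -
      isoCov D 0 / sphereArea d = (π / b) ^ (d / 2 : ℝ) *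
        ∫ s in Ioi 0, s ^ (d : ℝ) * ((isoCov D s - isoCov D 0) / s) *
          rexp (-(π ^ 2 / b) * s ^ 2) := by
  have hS : sphereArea d ≠ 0 := sphereArea_pos.ne'
  rw [← mul_right_inj' hS, ← integral_covariogram_mul_gaussian_sub hD hfin hb, mul_sub,
    sphereArea_mul_integral_avgFT hD hfin hb, mul_div_cancel₀ _ hS]

theorem tendsto_integral_avgFT_gaussian (hD : MeasurableSet D) (hfin : volume D ≠ ∞) {γ' : ℝ}
    (hderiv : Tendsto (fun h => (isoCov D h - isoCov D 0) / h) (𝓝[>] 0) (𝓝 γ')) :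
    Tendsto (fun b => ((∫ t in Ioi 0, t ^ (d + 1) * avgFT D t / t ^ 2 * rexp (-b * t ^ 2)) -
      isoCov D 0 / sphereArea d) / √b) (𝓝[>] 0)
      (𝓝 (π ^ (-(d / 2 + 1) : ℝ) * (Real.Gamma ((d + 1) / 2) / 2 * γ'))) := by
  obtain ⟨C, hC⟩ := exists_forall_abs_slope_le (abs_isoCov_le hD hfin) hderiv
  have hmeas : Measurable fun h => (isoCov D h - isoCov D 0) / h := by
    have := measurable_isoCov hD
    fun_prop
  have hβ : Tendsto (fun b : ℝ => π ^ 2 / b) (𝓝[>] 0) atTop :=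
    tendsto_inv_nhdsGT_zero.const_mul_atTop (by positivity)
  have habel := tendsto_rpow_mul_integral_rpow_mul_exp_neg_mul_sq (p := d)
    (neg_one_lt_zero.trans_le d.cast_nonneg) hmeas hC hderiv
  refine ((habel.comp hβ).const_mul _).congr' ?_
  filter_upwards [self_mem_nhdsWithin] with b hb
  rw [integral_avgFT_gaussian_sub hD hfin hb, mul_div_right_comm, div_rpow_div_sqrt d hb, mul_assoc]
  rfl

end GaussianMean

theorem cesaro_avgFT_tendsto_general (d : ℕ) (hd : 1 ≤ d) (D : Set (E d))
    (hDmeas : MeasurableSet D) (hDfin : volume D ≠ ∞) (γ' : ℝ)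
    (hderiv : Tendsto (fun h : ℝ => (isoCov D h - isoCov D 0) / h) (𝓝[>] (0 : ℝ)) (𝓝 γ')) :
    Tendsto (fun R : ℝ =>
        R⁻¹ * ∫ ρ in Set.Ioc (0 : ℝ) R,
          2 * Real.pi ^ 2 * unitBallVol (d - 1) * ρ ^ (d + 1) * avgFT D ρ)
      atTop (𝓝 (-γ')) := by
  have : NeZero d := ⟨by omega⟩
  have hmean := tendsto_average_of_tendsto_gaussian
    ((measurable_id.pow_const (d + 1)).mul (measurable_avgFT hDmeas hDfin))
    (fun t ht => mul_nonneg (pow_nonneg (le_of_lt ht) _) (avgFT_nonneg D t))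
    (fun b => integrableOn_pow_mul_avgFT_div_sq_mul_exp hDmeas hDfin)
    (tendsto_integral_avgFT_gaussian hDmeas hDfin hderiv)
  have hlim := hmean.const_mul (2 * π ^ 2 * unitBallVol (d - 1))
  convert hlim using 1
  · ext R
    simp only [mul_left_comm _ R⁻¹, ← integral_const_mul, mul_assoc, id, Pi.mul_apply]
  · congr 1
    linear_combination γ' * two_pi_sq_mul_unitBallVol_mul d

/-- if `γ̄_D'⁺(0)` exists (finitely) and `ρ^{d+1} γ̄̂_D(ρ)` is bounded on `(0,∞)`,
then the Cesàro averages of `2π² κ_{d−1} ρ^{d+1} γ̄̂_D(ρ)` converge to `−γ̄_D'⁺(0)`. -/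
theorem cesaro_avgFT_tendsto (d : ℕ) (hd : 1 ≤ d) (D : Set (E d))
    (hDmeas : MeasurableSet D) (hDbdd : Bornology.IsBounded D) (γ' : ℝ)
    (hderiv : Tendsto (fun h : ℝ => (isoCov D h - isoCov D 0) / h) (𝓝[>] (0 : ℝ)) (𝓝 γ'))
    (hbdd : ∃ C : ℝ, ∀ ρ : ℝ, 0 < ρ → |ρ ^ (d + 1) * avgFT D ρ| ≤ C) :
    Tendsto (fun R : ℝ =>
        R⁻¹ * ∫ ρ in Set.Ioc (0 : ℝ) R,
          2 * Real.pi ^ 2 * unitBallVol (d - 1) * ρ ^ (d + 1) * avgFT D ρ)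
      atTop (𝓝 (-γ')) :=
  cesaro_avgFT_tendsto_general d hd D hDmeas hDbdd.measure_lt_top.ne γ' hderiv

end
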